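/- (Blekherman–Sinn) The complete bipartite graph K_{5,5} (on 10 vertices) is 4-independent but is not 3-independent; that is, the minimum d for which K_{5,5} is d-independent is 4. -/

import Mathlib

open MeasureTheory

noncomputable section

/-- The rigidity vector `R_{ij}(p)`: the block vector in `(ℝ^d)^n` whose `i`-th block is
`p i − p j`, whose `j`-th block is `p j − p i`, and whose other blocks are zero. -/
def rigidityVec {n d : ℕ} (p : Fin n → Fin d → ℝ) (i j : Fin n) : Fin n → Fin d → ℝ :=
  fun k => if k = i then p i - p j else if k = j then p j - p i else 0

/-- A graph `G` is `d`-independent if for Lebesgue-almost every `p : {1,…,n} → ℝ^d`,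
the rigidity vectors `{R_{ij}(p) : ij ∈ E(G)}` are linearly independent. -/
def IsIndepGraph {n : ℕ} (d : ℕ) (G : SimpleGraph (Fin n)) : Prop :=
  ∀ᵐ p : Fin n → Fin d → ℝ ∂volume,
    LinearIndependent ℝ (fun e : {e : Fin n × Fin n // G.Adj e.1 e.2 ∧ e.1 < e.2} =>
      rigidityVec p e.1.1 e.1.2)

/-- The complete bipartite graph `K_{5,5}` on vertex set `Fin 10`, with parts
`{0,…,4}` and `{5,…,9}`. -/
def K55 : SimpleGraph (Fin 10) :=
  SimpleGraph.fromRel (fun i j => i.val < 5 ∧ 5 ≤ j.val)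

lemma line_null {E V ι : Type*} [Fintype ι] [DecidableEq ι]
    [AddCommGroup E] [Module ℝ E] [AddCommGroup V] [Module ℝ V]
    (T : ι → E →ₗ[ℝ] V) (p0 : E) (h : LinearIndependent ℝ (fun e => T e p0)) (x : E) :
    {r : ℝ | ¬ LinearIndependent ℝ (fun e => T e (p0 + r • x))}.Finite := by
  obtain ⟨φ, hφ⟩ := LinearMap.exists_leftInverse_of_injective
    (Fintype.linearCombination ℝ (fun e => T e p0)) (by
      exact LinearMap.ker_eq_bot.2 (linearIndependent_iff_injective_fintypeLinearCombination.1 h))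
  have h1 : ∀ e, φ (T e p0) = Pi.single e 1 := by
    intro e
    have := LinearMap.congr_fun hφ (Pi.single e 1)
    simpa [Fintype.linearCombination_apply_single] using this
  let A : Matrix ι ι ℝ := Matrix.of fun e => φ (T e x)
  let q : Polynomial ℝ := (1 + (Polynomial.X : Polynomial ℝ) • A.map Polynomial.C).det
  have hq : ∀ r, q.eval r = (1 + r • A).det := by
    intro r
    simp only [q]
    rw [← Polynomial.coe_evalRingHom, RingHom.map_det]
    congr 1
    ext i j
    by_cases hij : i = j <;> simp [hij] <;> ring
  have hq0 : q ≠ 0 := by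
    intro h0
    have := hq 0
    simp [h0] at this
  refine (Polynomial.finite_setOfPred_isRoot hq0).subset ?_
  intro r hr
  simp only [Set.mem_ofPred_eq, Polynomial.IsRoot.def, hq] at hr ⊢
  by_contra hdet
  apply hr
  have h2 : LinearIndependent ℝ (1 + r • A).row :=
    Matrix.linearIndependent_rows_iff_isUnit.2
      ((Matrix.isUnit_iff_isUnit_det _).2 (isUnit_iff_ne_zero.2 hdet))
  apply LinearIndependent.of_comp φ
  have h3 : φ ∘ (fun e => T e (p0 + r • x)) = (1 + r • A).row := by
    ext e j
    simp [h1, A, Matrix.row, Matrix.one_apply, Pi.single_apply, eq_comm]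
  rw [h3]
  exact h2

lemma cone_null {E : Type*}
    [NormedAddCommGroup E] [NormedSpace ℝ E] [FiniteDimensional ℝ E]
    [MeasurableSpace E] [BorelSpace E] (μ : Measure E) [μ.IsAddHaarMeasure]
    (S : Set E) (hS : MeasurableSet S) (hl : ∀ x : E, {r : ℝ | r • x ∈ S}.Finite) :
    μ S = 0 := by
  have hm : MeasurableSet {z : ℝ × E | z.1 • z.2 ∈ S} :=
    hS.preimage (by fun_prop : Continuous fun z : ℝ × E => z.1 • z.2).measurable
  have h0 : (Measure.prod μ (volume : Measure ℝ)) {z : E × ℝ | z.2 • z.1 ∈ S} = 0 := by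
    rw [Measure.measure_prod_null]
    · refine Filter.Eventually.of_forall fun x => ?_
      exact (hl x).measure_zero _
    · exact hm.preimage measurable_swap
  have h1 : (Measure.prod (volume : Measure ℝ) μ) {z : ℝ × E | z.1 • z.2 ∈ S} = 0 := by
    rw [← Measure.prod_swap, Measure.map_apply measurable_swap hm]
    exact h0
  rw [Measure.measure_prod_null hm] at h1
  have h2 : ∃ r : ℝ, r ≠ 0 ∧ μ (Prod.mk r ⁻¹' {z : ℝ × E | z.1 • z.2 ∈ S}) = 0 := by
    have h3 : ∀ᵐ r : ℝ, r ≠ 0 := by simp [ae_iff]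
    exact (h3.and h1).exists
  obtain ⟨r, hr, hr0⟩ := h2
  have : Prod.mk r ⁻¹' {z : ℝ × E | z.1 • z.2 ∈ S} = (fun x => r • x) ⁻¹' S := rfl
  rw [this, Measure.addHaar_preimage_smul μ hr] at hr0
  rcases mul_eq_zero.1 hr0 with h4 | h4
  · exfalso
    simp [hr] at h4
  · exact h4

lemma ae_indep {E V ι : Type*} [Fintype ι] [DecidableEq ι]
    [NormedAddCommGroup E] [NormedSpace ℝ E] [FiniteDimensional ℝ E]
    [MeasurableSpace E] [BorelSpace E] (μ : Measure E) [μ.IsAddHaarMeasure]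
    [NormedAddCommGroup V] [NormedSpace ℝ V]
    (T : ι → E →ₗ[ℝ] V) (p0 : E) (h : LinearIndependent ℝ (fun e => T e p0)) :
    ∀ᵐ p ∂μ, LinearIndependent ℝ (fun e => T e p) := by
  let S : Set E := {x | ¬ LinearIndependent ℝ (fun e => T e (p0 + x))}
  have hS : MeasurableSet S := by
    have ho : IsOpen {f : ι → V | LinearIndependent ℝ f} := isOpen_setOfPred_linearIndependent
    have hc : Continuous (fun x : E => fun e => T e (p0 + x)) := by
      refine continuous_pi fun e => ?_
      exact (T e).continuous_of_finiteDimensional.comp (by fun_prop)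
    exact ((ho.preimage hc).measurableSet).compl
  have hS0 : μ S = 0 := cone_null μ S hS (line_null T p0 h)
  have h5 : μ ((fun x => -p0 + x) ⁻¹' S) = 0 := by
    rw [measure_preimage_add]; exact hS0
  rw [ae_iff]
  convert h5 using 2
  ext p
  simp [S]

/-- The rigidity vector as a linear map in the placement. -/
def rigLin (n d : ℕ) (i j : Fin n) :
    (Fin n → Fin d → ℝ) →ₗ[ℝ] (Fin n → Fin d → ℝ) where
  toFun p := rigidityVec p i j
  map_add' p q := by
    ext k c
    simp only [rigidityVec, Pi.add_apply]
    split_ifs <;> simp <;> ring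
  map_smul' r p := by
    ext k c
    simp only [rigidityVec, Pi.smul_apply, RingHom.id_apply]
    split_ifs <;> simp <;> ring

def lft (a : Fin 5) : Fin 10 := Fin.castAdd 5 a
def rgt (b : Fin 5) : Fin 10 := Fin.natAdd 5 b

abbrev Edg := {e : Fin 10 × Fin 10 // K55.Adj e.1 e.2 ∧ e.1 < e.2}

def edgF (ab : Fin 5 × Fin 5) : Edg :=
  ⟨(lft ab.1, rgt ab.2), by
    obtain ⟨a, b⟩ := ab
    simp only [K55, SimpleGraph.fromRel_adj, lft, rgt, ne_eq, Fin.ext_iff, Fin.lt_def,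
      Fin.val_castAdd, Fin.val_natAdd]
    omega⟩

lemma edgF_bij : Function.Bijective edgF := by
  constructor
  · rintro ⟨a, b⟩ ⟨c, d⟩ h
    simp only [edgF, lft, rgt, Subtype.mk.injEq, Prod.mk.injEq, Fin.ext_iff,
      Fin.val_castAdd, Fin.val_natAdd] at h
    ext <;> simp <;> omega
  · rintro ⟨⟨i, j⟩, h⟩
    simp only [K55, SimpleGraph.fromRel_adj, ne_eq, Fin.ext_iff, Fin.lt_def] at h
    have hi : i.val < 5 := by omega
    have hj : j.val - 5 < 5 := by omega
    have hj' : 5 ≤ j.val := by omega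
    refine ⟨(⟨i, hi⟩, ⟨j - 5, hj⟩), ?_⟩
    clear h
    simp only [edgF, lft, rgt, Subtype.mk.injEq, Prod.mk.injEq, Fin.ext_iff,
      Fin.val_castAdd, Fin.val_natAdd]
    exact ⟨trivial, by omega⟩

lemma indep_iff {d : ℕ} (p : Fin 10 → Fin d → ℝ) :
    LinearIndependent ℝ (fun e : Edg => rigidityVec p e.1.1 e.1.2) ↔
    LinearIndependent ℝ (fun ab : Fin 5 × Fin 5 => rigidityVec p (lft ab.1) (rgt ab.2)) :=
  (linearIndependent_equiv (Equiv.ofBijective edgF edgF_bij)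
    (f := fun e : Edg => rigidityVec p e.1.1 e.1.2)).symm

lemma lft_ne_rgt (a b : Fin 5) : lft a ≠ rgt b := by
  simp only [lft, rgt, ne_eq, Fin.ext_iff, Fin.val_castAdd, Fin.val_natAdd]; omega

lemma lft_inj {a b : Fin 5} : lft a = lft b ↔ a = b := by
  simp [lft, Fin.ext_iff]

lemma rgt_inj {a b : Fin 5} : rgt a = rgt b ↔ a = b := by
  simp [rgt, Fin.ext_iff]

lemma rig_lft {d : ℕ} (p : Fin 10 → Fin d → ℝ) (a b k : Fin 5) (c : Fin d) :
    rigidityVec p (lft a) (rgt b) (lft k) c = if k = a then p (lft a) c - p (rgt b) c else 0 := by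
  simp only [rigidityVec, lft_inj, lft_ne_rgt, if_false]
  split_ifs <;> simp

lemma rig_rgt {d : ℕ} (p : Fin 10 → Fin d → ℝ) (a b k : Fin 5) (c : Fin d) :
    rigidityVec p (lft a) (rgt b) (rgt k) c = if k = b then p (rgt b) c - p (lft a) c else 0 := by
  simp only [rigidityVec, rgt_inj, (lft_ne_rgt _ _).symm, if_false]
  split_ifs <;> simp

lemma sum_lft {d : ℕ} (p : Fin 10 → Fin d → ℝ) (g : Fin 5 × Fin 5 → ℝ) (k : Fin 5) (c : Fin d) :
    (∑ ab : Fin 5 × Fin 5, g ab • rigidityVec p (lft ab.1) (rgt ab.2)) (lft k) c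
      = ∑ b, g (k, b) * (p (lft k) c - p (rgt b) c) := by
  simp only [Finset.sum_apply, Pi.smul_apply, smul_eq_mul, rig_lft, Fintype.sum_prod_type]
  rw [Finset.sum_comm]
  simp

lemma sum_rgt {d : ℕ} (p : Fin 10 → Fin d → ℝ) (g : Fin 5 × Fin 5 → ℝ) (k : Fin 5) (c : Fin d) :
    (∑ ab : Fin 5 × Fin 5, g ab • rigidityVec p (lft ab.1) (rgt ab.2)) (rgt k) c
      = ∑ a, g (a, k) * (p (rgt k) c - p (lft a) c) := by
  simp only [Finset.sum_apply, Pi.smul_apply, smul_eq_mul, rig_rgt, Fintype.sum_prod_type]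
  simp

lemma lft_or_rgt (i : Fin 10) : (∃ a, i = lft a) ∨ ∃ b, i = rgt b := by
  by_cases h : i.val < 5
  · exact Or.inl ⟨⟨i, h⟩, by simp [lft, Fin.ext_iff]⟩
  · exact Or.inr ⟨⟨i - 5, by omega⟩, by simp [rgt, Fin.ext_iff]; omega⟩

lemma aff_dep {d : ℕ} (hd : d ≤ 3) (p : Fin 5 → Fin d → ℝ) :
    ∃ a : Fin 5 → ℝ, a ≠ 0 ∧ ∑ i, a i = 0 ∧ ∀ c, ∑ i, a i * p i c = 0 := by
  have h : ¬ LinearIndependent ℝ (fun i : Fin 5 => ((1 : ℝ), p i)) := by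
    intro h
    have := h.fintype_card_le_finrank
    simp at this
    omega
  rw [Fintype.not_linearIndependent_iff] at h
  obtain ⟨a, h1, i, hi⟩ := h
  refine ⟨a, fun h => hi (by simp [h]), ?_, fun c => ?_⟩
  · have := congrArg Prod.fst h1
    simpa [Prod.fst_sum] using this
  · have := congrFun (congrArg Prod.snd h1) c
    simpa [Prod.snd_sum] using this

lemma not_indep {d : ℕ} (hd : d ≤ 3) : ¬ IsIndepGraph d K55 := by
  intro h
  obtain ⟨p, hp⟩ := h.exists
  have hp := (indep_iff p).1 hp
  obtain ⟨a, a0, a1, a2⟩ := aff_dep hd (fun i => p (lft i))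
  obtain ⟨b, b0, b1, b2⟩ := aff_dep hd (fun i => p (rgt i))
  obtain ⟨i, hi⟩ := Function.ne_iff.1 a0
  obtain ⟨j, hj⟩ := Function.ne_iff.1 b0
  have := Fintype.linearIndependent_iff.1 hp (fun ab => a ab.1 * b ab.2) (by
    ext k c
    rcases lft_or_rgt k with ⟨k, rfl⟩ | ⟨k, rfl⟩
    · rw [sum_lft]
      have : ∑ x, a k * b x * (p (lft k) c - p (rgt x) c)
          = a k * p (lft k) c * ∑ x, b x - a k * ∑ x, b x * p (rgt x) c := by
        rw [Finset.mul_sum, Finset.mul_sum, ← Finset.sum_sub_distrib]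
        exact Finset.sum_congr rfl fun _ _ => by ring
      simp [this, b1, b2]
    · rw [sum_rgt]
      have : ∑ x, a x * b k * (p (rgt k) c - p (lft x) c)
          = b k * p (rgt k) c * ∑ x, a x - b k * ∑ x, a x * p (lft x) c := by
        rw [Finset.mul_sum, Finset.mul_sum, ← Finset.sum_sub_distrib]
        exact Finset.sum_congr rfl fun _ _ => by ring
      simp [this, a1, a2]) (i, j)
  exact mul_ne_zero hi hj this

def wit : Fin 10 → Fin 4 → ℝ :=
  ![![0,0,0,0], ![2,0,0,0], ![0,2,0,0], ![0,0,2,0], ![0,0,0,2],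
    ![1,0,0,0], ![1,1,0,0], ![0,1,1,0], ![0,0,1,1], ![0,0,0,1]]

lemma wit_indep :
    LinearIndependent ℝ
      (fun ab : Fin 5 × Fin 5 => rigidityVec wit (lft ab.1) (rgt ab.2)) := by
  rw [Fintype.linearIndependent_iff]
  intro g hg
  have hL : ∀ (k : Fin 5) (c : Fin 4), ∑ b, g (k, b) * (wit (lft k) c - wit (rgt b) c) = 0 := by
    intro k c
    rw [← sum_lft, hg]; rfl
  have hR : ∀ (k : Fin 5) (c : Fin 4), ∑ a, g (a, k) * (wit (rgt k) c - wit (lft a) c) = 0 := by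
    intro k c
    rw [← sum_rgt, hg]; rfl
  clear hg
  simp only [Fin.forall_fin_succ, Fin.sum_univ_succ] at hL hR
  simp [wit, lft, rgt, Fin.natAdd, Fin.castAdd, Fin.castLE] at hL hR
  rintro ⟨i, j⟩
  obtain ⟨⟨l1, l2, l3, l4⟩, ⟨l5, l6, l7, l8⟩, ⟨l9, l10, l11, l12⟩, ⟨l13, l14, l15, l16⟩,
    l17, l18, l19, l20⟩ := hL
  obtain ⟨⟨r1, r2, r3, r4⟩, ⟨r5, r6, r7, r8⟩, ⟨r9, r10, r11, r12⟩, ⟨r13, r14, r15, r16⟩,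
    r17, r18, r19, r20⟩ := hR
  fin_cases i <;> fin_cases j <;> dsimp <;> linarith

theorem K55_indep_four : IsIndepGraph 4 K55 ∧ ¬ IsIndepGraph 3 K55 ∧
    sInf {d : ℕ | IsIndepGraph d K55} = 4 := by
  have h4 : IsIndepGraph 4 K55 := by
    have := ae_indep (volume : Measure (Fin 10 → Fin 4 → ℝ))
      (fun ab : Fin 5 × Fin 5 => rigLin 10 4 (lft ab.1) (rgt ab.2)) wit wit_indep
    filter_upwards [this] with p hp
    exact (indep_iff p).2 hp
  refine ⟨h4, not_indep le_rfl, ?_⟩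
  apply le_antisymm
  · exact Nat.sInf_le h4
  · refine le_csInf ⟨4, h4⟩ fun d hd => ?_
    by_contra hlt
    exact not_indep (by omega) hd
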